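/- Let a, b ∈ ℤ with b·(a² − 4b) ≠ 0 and let q be an odd prime not dividing b·(a² − 4b). Then a_q ≡ 1 − legendreSym q (−1) (mod 4) if and only if neither b̄ nor ā² − 4b̄ is a square in 𝔽_q. -/

import Mathlib

/-!
Since `(-1/q) ≡ q (mod 4)`, the congruence on `a_q` says exactly that the number `N` of points of
the reduced curve is `≡ 2 (mod 4)`.

Write `f = x³ + a x² + b x`. Counting points above each abscissa gives
`N = 1 + ∑ x, (χ (f x) + 1)` with `χ` the quadratic character. Each root of `f` contributes `1`, any
other abscissa contributes `0` or `2`. Translation by the 2-torsion point `(0, 0)` acts on abscissas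
by `x ↦ b / x` and `f (b / x) = (b / x²)² f x`, so the contributions of the non-roots with `x² ≠ b`
cancel in pairs modulo 4 (`sum_offRoot`). What remains is

* the number of roots of `f`, which is `3` or `1` according to whether `a² - 4b` is a square
  (`card_roots`);
* the contributions of `x = ±r` when `b = r²` (there are none when `b` is not a square). There
  `f (±r) = r² (a ± 2r)`, and `(a + 2r)(a - 2r) = a² - 4b`, so the two contributions are equal when
  `a² - 4b` is a square, hence cancel modulo 4, while exactly one of them is `2` when `a² - 4b` is
  not a square.

Hence `N ≡ 2 (mod 4)` precisely when neither `b` nor `a² - 4b` is a square (`card_point_mod_four`).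
-/

/-- The elliptic curve `E_{a,b} : y² = x³ + a·x² + b·x` as a Weierstrass curve
in affine coordinates. -/
def Eab {F : Type*} [CommRing F] (a b : F) : WeierstrassCurve.Affine F :=
  { a₁ := 0, a₂ := a, a₃ := 0, a₄ := b, a₆ := 0 }

/-- The trace of Frobenius `a_q = q + 1 - #Ē_{a,b}(𝔽_q)` of the reduction of
`E_{a,b}` modulo `q`. -/
noncomputable def aq (a b : ℤ) (q : ℕ) : ℤ :=
  (q : ℤ) + 1 - (Nat.card (Eab (a : ZMod q) (b : ZMod q)).Point : ℤ)

section PointCount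

variable {F : Type*} [Field F] [Fintype F] [DecidableEq F]

/-- The number of square roots of `u` in `F`, as an element of `ZMod 4`, with the value at `u = 0`
replaced by `0`. Leaving out `u = 0` makes every value `0` or `2`, so that equal values cancel in
pairs. -/
def offRoot (u : F) : ZMod 4 := if u = 0 then 0 else ((quadraticChar F u + 1 : ℤ) : ZMod 4)

lemma offRoot_add_self (u : F) : offRoot u + offRoot u = 0 := by
  unfold offRoot
  split_ifs with h
  · simp
  · rcases quadraticChar_dichotomy h with h | h <;> rw [h] <;> decide

lemma offRoot_sq_mul {c : F} (hc : c ≠ 0) (u : F) : offRoot (c ^ 2 * u) = offRoot u := by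
  simp only [offRoot, map_mul, quadraticChar_sq_one' hc, one_mul, mul_eq_zero,
    pow_eq_zero_iff two_ne_zero, hc, false_or]

lemma offRoot_of_isSquare {u : F} (hu : u ≠ 0) (h : IsSquare u) : offRoot u = 2 := by
  rw [offRoot, if_neg hu, (quadraticChar_one_iff_isSquare hu).2 h]
  decide

lemma offRoot_of_not_isSquare {u : F} (h : ¬ IsSquare u) : offRoot u = 0 := by
  have hu : u ≠ 0 := by rintro rfl; exact h IsSquare.zero
  rw [offRoot, if_neg hu, quadraticChar_neg_one_iff_not_isSquare.2 h]
  decide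

/-- The contributions of the abscissas not fixed by `x ↦ b / x` cancel in pairs. -/
lemma sum_offRoot (a b : F) (hb : b ≠ 0) :
    ∑ x : F, offRoot (x ^ 3 + a * x ^ 2 + b * x) =
      ∑ x : F with x ^ 2 = b, offRoot (x ^ 3 + a * x ^ 2 + b * x) := by
  rw [← Finset.sum_filter_add_sum_filter_not Finset.univ (fun x : F => x ^ 2 = b), add_eq_left]
  -- At `x = 0` the junk value `b / 0 = 0` makes `0` a fixed point, where the summand vanishes.
  refine Finset.sum_involution (fun x _ => b / x) ?_ ?_ ?_ ?_
  · intro x _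
    by_cases hx : x = 0
    · simp [hx, offRoot]
    · have : (b / x) ^ 3 + a * (b / x) ^ 2 + b * (b / x) =
          (b / x ^ 2) ^ 2 * (x ^ 3 + a * x ^ 2 + b * x) := by
        field_simp
        ring
      rw [this, offRoot_sq_mul (div_ne_zero hb (pow_ne_zero 2 hx)), offRoot_add_self]
  · intro x hx h0 heq
    have hx0 : x ≠ 0 := by
      rintro rfl
      simp [offRoot] at h0
    rw [div_eq_iff hx0] at heq
    simp only [Finset.mem_filter] at hx
    exact hx.2 (by rw [heq]; ring)
  · intro x hx
    simp only [Finset.mem_filter, Finset.mem_univ, true_and] at hx ⊢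
    intro h
    by_cases hx0 : x = 0
    · simp [hx0] at h
      exact hb h.symm
    · rw [div_pow, div_eq_iff (pow_ne_zero 2 hx0)] at h
      apply hx
      apply mul_left_cancel₀ hb
      rw [← h]
      ring
  · intro x _
    exact div_div_cancel₀ hb

/-- In `ZMod 4`, the number of roots of `x³ + a x² + b x` is `3` or `1` according to whether
`a² - 4b` is a square. -/
lemma card_roots (a b : F) (h2 : (2 : F) ≠ 0) (hb : b ≠ 0) (hd : a ^ 2 - 4 * b ≠ 0) :
    ((Finset.univ.filter fun x : F => x ^ 3 + a * x ^ 2 + b * x = 0).card : ZMod 4) =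
      open Classical in if IsSquare (a ^ 2 - 4 * b) then 3 else 1 := by
  split_ifs with h
  · obtain ⟨d, hdd⟩ := h
    have hd0 : d ≠ 0 := by
      rintro rfl
      simp [hdd] at hd
    have hprod : ((-a + d) / 2) * ((-a - d) / 2) = b := by
      field_simp
      linear_combination hdd
    have : (Finset.univ.filter fun x : F => x ^ 3 + a * x ^ 2 + b * x = 0) =
        {0, (-a + d) / 2, (-a - d) / 2} := by
      ext x
      simp only [Finset.mem_filter, Finset.mem_univ, true_and, Finset.mem_insert,
        Finset.mem_singleton]
      have : x ^ 3 + a * x ^ 2 + b * x =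
          x * ((x - (-a + d) / 2) * (x - (-a - d) / 2)) := by
        rw [← hprod]
        field_simp
        ring
      rw [this, mul_eq_zero, mul_eq_zero, sub_eq_zero, sub_eq_zero]
    rw [this, Finset.card_eq_three.2 ⟨_, _, _, ?_, ?_, ?_, rfl⟩]
    · rfl
    · intro h
      rw [← h, zero_mul] at hprod
      exact hb hprod.symm
    · intro h
      rw [← h, mul_zero] at hprod
      exact hb hprod.symm
    · intro h
      field_simp at h
      apply mul_ne_zero h2 hd0
      linear_combination h
  · have : (Finset.univ.filter fun x : F => x ^ 3 + a * x ^ 2 + b * x = 0) = {0} := by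
      ext x
      simp only [Finset.mem_filter, Finset.mem_univ, true_and, Finset.mem_singleton]
      refine ⟨fun hx => ?_, by rintro rfl; ring⟩
      by_contra hx0
      have hx' : x ^ 2 + a * x + b = 0 := by
        apply mul_left_cancel₀ hx0
        linear_combination hx
      exact h ⟨2 * x + a, by linear_combination (-4) * hx'⟩
    rw [this]
    simp

/-- Counting the points of the nonsingular curve above each abscissa. -/
lemma card_point (a b : F) (hF : ringChar F ≠ 2) (h2 : (2 : F) ≠ 0) (hb : b ≠ 0)
    (hd : a ^ 2 - 4 * b ≠ 0) :
    (Nat.card (Eab a b).Point : ℤ) =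
      1 + ∑ x : F, (quadraticChar F (x ^ 3 + a * x ^ 2 + b * x) + 1) := by
  have hΔ : (Eab a b).Δ ≠ 0 := by
    have : (Eab a b).Δ = 2 ^ 4 * (b ^ 2 * (a ^ 2 - 4 * b)) := by
      simp only [Eab, WeierstrassCurve.Δ, WeierstrassCurve.b₂, WeierstrassCurve.b₄,
        WeierstrassCurve.b₆, WeierstrassCurve.b₈]
      ring
    rw [this]
    exact mul_ne_zero (pow_ne_zero 4 h2) (mul_ne_zero (pow_ne_zero 2 hb) hd)
  have hns : ∀ x y : F, (Eab a b).Nonsingular x y ↔ y ^ 2 = x ^ 3 + a * x ^ 2 + b * x := by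
    intro x y
    rw [← WeierstrassCurve.Affine.equation_iff_nonsingular_of_Δ_ne_zero hΔ,
      WeierstrassCurve.Affine.equation_iff]
    simp [Eab]
  let e : (Eab a b).Point ≃
      Option (Σ x : F, {y : F // y ^ 2 = x ^ 3 + a * x ^ 2 + b * x}) :=
    { toFun := fun P => match P with
        | .zero => none
        | .some x y h => some ⟨x, y, (hns x y).1 h⟩
      invFun := fun P => match P with
        | none => .zero
        | some ⟨x, y, h⟩ => .some x y ((hns x y).2 h)
      left_inv := by rintro (_ | _) <;> rfl
      right_inv := by rintro (_ | ⟨x, y, h⟩) <;> rfl }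
  rw [Nat.card_congr e, Nat.card_eq_fintype_card, Fintype.card_option, Fintype.card_sigma]
  push_cast
  rw [add_comm]
  congr 1
  refine Finset.sum_congr rfl fun x _ => ?_
  rw [← quadraticChar_card_sqrts hF, Set.toFinset_card]
  rfl

/-- In `ZMod 4`, the point count reduces to the roots of the cubic and the square roots of `b`. -/
lemma card_point_cast (a b : F) (hF : ringChar F ≠ 2) (h2 : (2 : F) ≠ 0) (hb : b ≠ 0)
    (hd : a ^ 2 - 4 * b ≠ 0) :
    (Nat.card (Eab a b).Point : ZMod 4) =
      1 + (open Classical in if IsSquare (a ^ 2 - 4 * b) then 3 else 1) +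
        ∑ x : F with x ^ 2 = b, offRoot (x ^ 3 + a * x ^ 2 + b * x) := by
  have h := congrArg (Int.cast : ℤ → ZMod 4) (card_point a b hF h2 hb hd)
  rw [Int.cast_natCast, Int.cast_add, Int.cast_one, Int.cast_sum] at h
  rw [h, ← sum_offRoot a b hb, ← card_roots a b h2 hb hd, Finset.card_filter, Nat.cast_sum,
    add_assoc, ← Finset.sum_add_distrib]
  congr 1
  refine Finset.sum_congr rfl fun x _ => ?_
  unfold offRoot
  split_ifs with h0
  · simp [h0]
  · simp

theorem card_point_mod_four (a b : F) (hF : ringChar F ≠ 2) (hb : b ≠ 0)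
    (hd : a ^ 2 - 4 * b ≠ 0) :
    (Nat.card (Eab a b).Point : ZMod 4) = 2 ↔ ¬ IsSquare b ∧ ¬ IsSquare (a ^ 2 - 4 * b) := by
  have h2 : (2 : F) ≠ 0 := Ring.two_ne_zero hF
  rw [card_point_cast a b hF h2 hb hd]
  by_cases hbs : IsSquare b
  · obtain ⟨r, rfl⟩ := hbs
    have hr : r ≠ 0 := by
      rintro rfl
      simp at hb
    have hfac : a ^ 2 - 4 * (r * r) = (a + 2 * r) * (a - 2 * r) := by ring
    have hp : a + 2 * r ≠ 0 := fun h => hd (by rw [hfac, h, zero_mul])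
    have hm : a - 2 * r ≠ 0 := fun h => hd (by rw [hfac, h, mul_zero])
    have hne : r ≠ -r := by
      intro h
      exact mul_ne_zero h2 hr (by linear_combination h)
    have hset : (Finset.univ.filter fun x : F => x ^ 2 = r * r) = {r, -r} := by
      ext x
      simp [← pow_two, sq_eq_sq_iff_eq_or_eq_neg]
    have e1 : r ^ 3 + a * r ^ 2 + r * r * r = r ^ 2 * (a + 2 * r) := by ring
    have e2 : (-r) ^ 3 + a * (-r) ^ 2 + r * r * (-r) = r ^ 2 * (a - 2 * r) := by ring
    rw [hset, Finset.sum_pair hne, e1, e2, offRoot_sq_mul hr, offRoot_sq_mul hr]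
    have hχ : quadraticChar F (a ^ 2 - 4 * (r * r)) =
        quadraticChar F (a + 2 * r) * quadraticChar F (a - 2 * r) := by rw [hfac, map_mul]
    have hs : IsSquare (a ^ 2 - 4 * (r * r)) ↔ (IsSquare (a + 2 * r) ↔ IsSquare (a - 2 * r)) := by
      rw [← quadraticChar_one_iff_isSquare hd, ← quadraticChar_one_iff_isSquare hp,
        ← quadraticChar_one_iff_isSquare hm, hχ]
      rcases quadraticChar_dichotomy hp with h | h <;>
        rcases quadraticChar_dichotomy hm with h' | h' <;> rw [h, h'] <;> decide
    have hns : ¬ (¬ IsSquare (r * r) ∧ ¬ IsSquare (a ^ 2 - 4 * (r * r))) := fun h => h.1 ⟨r, rfl⟩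
    rw [iff_false_right hns]
    by_cases h : IsSquare (a + 2 * r) <;> by_cases h' : IsSquare (a - 2 * r)
    · rw [offRoot_of_isSquare hp h, offRoot_of_isSquare hm h', if_pos (hs.2 (by tauto))]
      decide
    · rw [offRoot_of_isSquare hp h, offRoot_of_not_isSquare h', if_neg (by rw [hs]; tauto)]
      decide
    · rw [offRoot_of_not_isSquare h, offRoot_of_isSquare hm h', if_neg (by rw [hs]; tauto)]
      decide
    · rw [offRoot_of_not_isSquare h, offRoot_of_not_isSquare h', if_pos (hs.2 (by tauto))]
      decide
  · have hset : (Finset.univ.filter fun x : F => x ^ 2 = b) = ∅ := by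
      ext x
      simp only [Finset.mem_filter, Finset.mem_univ, true_and, Finset.notMem_empty, iff_false]
      rintro rfl
      exact hbs (IsSquare.sq x)
    rw [hset, Finset.sum_empty]
    by_cases h : IsSquare (a ^ 2 - 4 * b)
    · rw [if_pos h, iff_false_right fun h' => h'.2 h]
      decide
    · rw [if_neg h, iff_true_right ⟨hbs, h⟩]
      decide

end PointCount

/-- Proposition 2.2, 'in particular' clause: `a_q ≡ 1 - (-1/q) (mod 4)` iff `q` is
admissible, i.e. neither `b` nor `a² - 4b` is a square mod `q`. -/
theorem stmt2 (a b : ℤ) (q : ℕ) (hq : q.Prime) (hq2 : q ≠ 2)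
    (hgood : ¬ (q : ℤ) ∣ b * (a ^ 2 - 4 * b)) :
    aq a b q ≡ 1 - @legendreSym q ⟨hq⟩ (-1) [ZMOD 4] ↔
      ¬ IsSquare ((b : ZMod q)) ∧ ¬ IsSquare ((a : ZMod q) ^ 2 - 4 * (b : ZMod q)) := by
  have : Fact q.Prime := ⟨hq⟩
  have hgood' : (b : ZMod q) * ((a : ZMod q) ^ 2 - 4 * (b : ZMod q)) ≠ 0 := by
    rw [← ZMod.intCast_zmod_eq_zero_iff_dvd] at hgood
    exact_mod_cast hgood
  rw [← card_point_mod_four (a : ZMod q) (b : ZMod q) ((ZMod.ringChar_zmod_n q).substr hq2)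
    (left_ne_zero_of_mul hgood') (right_ne_zero_of_mul hgood'), legendreSym.at_neg_one hq2, aq]
  generalize Nat.card (Eab (a : ZMod q) (b : ZMod q)).Point = N
  have hN : (N : ZMod 4) = 2 ↔ N % 4 = 2 := by
    rw [show (2 : ZMod 4) = ((2 : ℕ) : ZMod 4) from rfl, ZMod.natCast_eq_natCast_iff']
  have hodd : q % 2 = 1 := hq.eq_two_or_odd.resolve_left hq2
  rw [hN, ZMod.χ₄_nat_eq_if_mod_four, Int.ModEq]
  split_ifs <;> omega
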